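/- Let n₁ and n₂ be positive integers and let f = (f₁,f₂) ∈ 𝒪(ℂ²,0,0) be given by f₁(x₁,x₂) = x₁^{n₁}·O(1) + x₂^{n₂}·O(1) and f₂(x₁,x₂) = x₁^{n₁}·O(1) + x₂^{n₂}·O(1). If 0 is an isolated zero of f, then π_f(0) ≥ n₁n₂. -/

import Mathlib

open Metric Set Filter Topology Polynomial Asymptotics
open scoped Classical

noncomputable section

namespace ZhangPaper

/-- `ℂⁿ`. -/
abbrev Cn (n : ℕ) := Fin n → ℂ

variable {n : ℕ}

/-- A germ in `𝒪(ℂⁿ,0,0)`: holomorphic near `0` and fixing the origin. -/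
def IsGerm (f : Cn n → Cn n) : Prop := AnalyticAt ℂ f 0 ∧ f 0 = 0

/-- `q` is a regular value of `h` on `s`. -/
def IsRegularValueOn (h : Cn n → Cn n) (s : Set (Cn n)) (q : Cn n) : Prop :=
  ∀ x ∈ s, h x = q → Function.Bijective (fderiv ℂ h x)

/-- `m` is the zero order (multiplicity) of `h` at the isolated zero `p`:
the number of solutions of `h x = q` near `p`, for any regular value `q`
with `‖q‖` sufficiently small. -/
def HasZeroOrder (h : Cn n → Cn n) (p : Cn n) (m : ℕ) : Prop :=
  ∃ r > 0, AnalyticOnNhd ℂ h (closedBall p r) ∧ h p = 0 ∧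
    (∀ x ∈ closedBall p r, h x = 0 → x = p) ∧
    (∀ ε > 0, ∃ q : Cn n, ‖q‖ < ε ∧ IsRegularValueOn h (ball p r) q) ∧
    ∃ δ > 0, ∀ q : Cn n, ‖q‖ < δ → IsRegularValueOn h (ball p r) q →
      {x ∈ ball p r | h x = q}.ncard = m

/-- The zero order `π_h(p)` of `h` at `p`. -/
def zeroOrder (h : Cn n → Cn n) (p : Cn n) : ℕ := sInf {m | HasZeroOrder h p m}

/-- The fixed point index `μ_g(p)` of `g` at `p`. -/
def fixedPointIndex (g : Cn n → Cn n) (p : Cn n) : ℕ :=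
  zeroOrder (fun x => x - g x) p

/-- The local Dold index `P_M(f,0)`. -/
def doldIndex (f : Cn n → Cn n) (M : ℕ) : ℤ :=
  ∑ τ ∈ M.primeFactors.powerset,
    (-1 : ℤ) ^ τ.card * (fixedPointIndex (f^[M / (∏ p ∈ τ, p)]) 0 : ℤ)

/-- `x` is a periodic point of exact period `M` for `g`. -/
def ExactPeriodicPt (g : Cn n → Cn n) (M : ℕ) (x : Cn n) : Prop :=
  g^[M] x = x ∧ ∀ j, 0 < j → j < M → g^[j] x ≠ x

/-- `g` has at least `m` distinct periodic orbits of period `M` inside `B`. -/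
def AtLeastOrbits (g : Cn n → Cn n) (M m : ℕ) (B : Set (Cn n)) : Prop :=
  ∃ p : Fin m → Cn n,
    (∀ i, ExactPeriodicPt g M (p i) ∧ ∀ j < M, g^[j] (p i) ∈ B) ∧
    ∀ i j : Fin m, i ≠ j → ∀ l < M, g^[l] (p i) ≠ p j

/-- `g` has exactly `m` distinct periodic orbits of period `M` inside `B`. -/
def ExactlyOrbits (g : Cn n → Cn n) (M m : ℕ) (B : Set (Cn n)) : Prop :=
  AtLeastOrbits g M m B ∧ ¬ AtLeastOrbits g M (m + 1) B

/-- The number `𝒪_M(f,0)` of periodic orbits of period `M` of `f` hidden at the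
fixed point `0`: the largest `m` such that there is a ball `B` centered at `0` in which
`0` is the only fixed point of `f^M`, and a sequence of holomorphic maps fixing `0`
converging to `f` uniformly on `B`, each having `m` distinct periodic orbits of
period `M` in `B`. -/
def hiddenOrbits (f : Cn n → Cn n) (M : ℕ) : ℕ :=
  sSup {m | ∃ r > 0,
    (∀ x ∈ closedBall (0 : Cn n) r, f^[M] x = x → x = 0) ∧
    ∃ fk : ℕ → Cn n → Cn n,
      (∀ k, AnalyticOnNhd ℂ (fk k) (ball (0 : Cn n) r) ∧ fk k 0 = 0) ∧
      TendstoUniformlyOn fk f atTop (ball (0 : Cn n) r) ∧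
      ∀ k, AtLeastOrbits (fk k) M m (ball (0 : Cn n) r)}

/-- `0` is an isolated fixed point of `g`. -/
def IsolatedFixedPtAt0 (g : Cn n → Cn n) : Prop :=
  g 0 = 0 ∧ ∀ᶠ x in 𝓝[≠] (0 : Cn n), g x ≠ x

/-- `0` is an isolated zero of `h`. -/
def IsolatedZeroAt0 (h : Cn n → Cn n) : Prop :=
  h 0 = 0 ∧ ∀ᶠ x in 𝓝[≠] (0 : Cn n), h x ≠ 0

/-- `p` is a simple fixed point of `g`: `Dg(p)` has no eigenvalue `1`. -/
def SimpleFixedPt (g : Cn n → Cn n) (p : Cn n) : Prop :=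
  g p = p ∧ ¬ Module.End.HasEigenvalue ((fderiv ℂ g p).toLinearMap) 1

/-- The global fixed point index `L(g)` of `g` over `U`: the sum of the fixed point
indices at all fixed points of `g` in `U`. -/
def globalIndex (g : Cn n → Cn n) (U : Set (Cn n)) : ℤ :=
  ∑ᶠ p ∈ {x ∈ U | g x = x}, (fixedPointIndex g p : ℤ)

/-- The global Dold index `P_M(f)` over `U`. -/
def globalDold (f : Cn n → Cn n) (M : ℕ) (U : Set (Cn n)) : ℤ :=
  ∑ τ ∈ M.primeFactors.powerset,
    (-1 : ℤ) ^ τ.card * globalIndex (f^[M / (∏ p ∈ τ, p)]) U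

open MeasureTheory

/-- Real-analytic helper: total derivative of a function vanishing near the sphere integrates to 0. -/
lemma zero_int {r : ℝ} (w : Cn 2 → ℂ) (w' : Cn 2 → (Cn 2 →L[ℝ] ℂ)) (v : Cn 2)
    (hw : ∀ x ∈ closedBall (0 : Cn 2) r, HasFDerivAt w (w' x) x)
    (hc : ContinuousOn (fun x => w' x v) (closedBall 0 r))
    (hs : ∀ x ∈ sphere (0 : Cn 2) r, w =ᶠ[𝓝 x] 0) :
    ∫ x in ball (0 : Cn 2) r, w' x v = 0 := by
  set u : Cn 2 → ℂ := (ball (0 : Cn 2) r).indicator w with hu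
  set u' : Cn 2 → ℂ := (ball (0 : Cn 2) r).indicator (fun x => w' x v) with hu'
  have hcw : ContinuousOn w (closedBall 0 r) := fun x hx =>
    (hw x hx).continuousAt.continuousWithinAt
  have hK : IsCompact (closedBall (0 : Cn 2) r) := isCompact_closedBall 0 r
  have hiu : Integrable u := by
    rw [hu, integrable_indicator_iff measurableSet_ball]
    exact (hcw.integrableOn_compact hK).mono_set ball_subset_closedBall
  have hiu' : Integrable u' := by
    rw [hu', integrable_indicator_iff measurableSet_ball]
    exact (hc.integrableOn_compact hK).mono_set ball_subset_closedBall
  have hd : ∀ x, HasLineDerivAt ℝ u (u' x) x v := by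
    intro x
    by_cases hx : x ∈ ball (0 : Cn 2) r
    · have h1 : u =ᶠ[𝓝 x] w := by
        filter_upwards [isOpen_ball.mem_nhds hx] with y hy
        simp only [hu, indicator_of_mem hy]
      have h2 : u' x = w' x v := by simp only [hu', indicator_of_mem hx]
      rw [h2]
      exact ((hw x (ball_subset_closedBall hx)).congr_of_eventuallyEq h1).hasLineDerivAt v
    · have h2 : u' x = 0 := by simp only [hu', indicator_of_notMem hx]
      have h1 : u =ᶠ[𝓝 x] fun _ => 0 := by
        by_cases hx' : x ∈ sphere (0 : Cn 2) r
        · filter_upwards [hs x hx'] with y hy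
          simp only [hu, indicator]
          split_ifs
          · exact hy
          · rfl
        · have hx3 : x ∈ (closedBall (0 : Cn 2) r)ᶜ := by
            simp only [mem_compl_iff, mem_closedBall, mem_ball, mem_sphere] at *
            intro h
            rcases h.lt_or_eq with h | h
            · exact hx h
            · exact hx' h
          filter_upwards [isClosed_closedBall.isOpen_compl.mem_nhds hx3] with y hy
          have : y ∉ ball (0 : Cn 2) r := fun h => hy (ball_subset_closedBall h)
          simp only [hu, indicator_of_notMem this]
      rw [h2]
      have := ((hasFDerivAt_const (𝕜 := ℝ) (0 : ℂ) x).congr_of_eventuallyEq h1).hasLineDerivAt v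
      simpa using this
  have := integral_bilinear_hasLineDerivAt_right_eq_neg_left_of_integrable
    (μ := (volume : Measure (Cn 2))) (f := fun _ : Cn 2 => (1 : ℝ)) (f' := fun _ => 0) (g := u) (g' := u') (v := v)
    (B := ContinuousLinearMap.lsmul ℝ ℝ) (by simp) (by simpa using hiu') (by simpa using hiu)
    (fun x _ => by simpa using (hasFDerivAt_const (𝕜 := ℝ) (1 : ℝ) x).hasLineDerivAt v)
    (fun x _ => hd x)
  simp only [ContinuousLinearMap.lsmul_apply, one_smul, zero_smul, integral_zero, neg_zero] at this
  rwa [hu', integral_indicator measurableSet_ball] at this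

/-- vanishing of `φ ∘ F` near sphere points -/
lemma phi_vanish {r c : ℝ} (F : Cn 2 → Cn 2) (φ : Cn 2 → ℝ)
    (hF : AnalyticOnNhd ℂ F (closedBall 0 r))
    (hφ : ∀ y, c ≤ ‖y‖ → φ y = 0) (hs : ∀ x ∈ sphere (0 : Cn 2) r, c < ‖F x‖)
    (x : Cn 2) (hx : x ∈ sphere (0 : Cn 2) r) : ∀ᶠ y in 𝓝 x, φ (F y) = 0 := by
  have h := ((hF x (sphere_subset_closedBall hx)).continuousAt.norm).eventually
    (lt_mem_nhds (hs x hx))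
  filter_upwards [h] with y hy using hφ _ hy.le

lemma wirt {r c : ℝ} (F : Cn 2 → Cn 2) (φ : Cn 2 → ℝ) (J V : Cn 2 → ℂ) (e : Cn 2)
    (hF : AnalyticOnNhd ℂ F (closedBall 0 r)) (hJ : AnalyticOnNhd ℂ J (closedBall 0 r))
    (hV : AnalyticOnNhd ℂ V (closedBall 0 r))
    (hφs : ContDiff ℝ 1 φ)
    (hφ : ∀ y, c ≤ ‖y‖ → φ y = 0) (hs : ∀ x ∈ sphere (0 : Cn 2) r, c < ‖F x‖) :
    IntegrableOn (fun x => (((fderiv ℝ φ (F x) (fderiv ℂ F x e) : ℝ) : ℂ)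
        - Complex.I * ((fderiv ℝ φ (F x) (Complex.I • fderiv ℂ F x e) : ℝ) : ℂ))
          * (starRingEnd ℂ (J x) * V x)
        + 2 * (φ (F x) : ℂ) * starRingEnd ℂ (J x) * fderiv ℂ V x e) (ball (0 : Cn 2) r) ∧
    ∫ x in ball (0 : Cn 2) r,
      ((((fderiv ℝ φ (F x) (fderiv ℂ F x e) : ℝ) : ℂ)
        - Complex.I * ((fderiv ℝ φ (F x) (Complex.I • fderiv ℂ F x e) : ℝ) : ℂ))
          * (starRingEnd ℂ (J x) * V x)
        + 2 * (φ (F x) : ℂ) * starRingEnd ℂ (J x) * fderiv ℂ V x e) = 0 := by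
  set K := closedBall (0 : Cn 2) r with hKdef
  have hK : IsCompact K := isCompact_closedBall 0 r
  have hFr : ∀ x ∈ K, HasFDerivAt F ((fderiv ℂ F x).restrictScalars ℝ) x := fun x hx =>
    (hF x hx).differentiableAt.hasFDerivAt.restrictScalars ℝ
  have hJr : ∀ x ∈ K, HasFDerivAt J ((fderiv ℂ J x).restrictScalars ℝ) x := fun x hx =>
    (hJ x hx).differentiableAt.hasFDerivAt.restrictScalars ℝ
  have hVr : ∀ x ∈ K, HasFDerivAt V ((fderiv ℂ V x).restrictScalars ℝ) x := fun x hx =>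
    (hV x hx).differentiableAt.hasFDerivAt.restrictScalars ℝ
  let w : Cn 2 → ℂ := fun x => (φ (F x) : ℂ) * (starRingEnd ℂ (J x) * V x)
  let A : Cn 2 → (Cn 2 →L[ℝ] ℂ) := fun x => Complex.ofRealCLM.comp
    ((fderiv ℝ φ (F x)).comp ((fderiv ℂ F x).restrictScalars ℝ))
  let B : Cn 2 → (Cn 2 →L[ℝ] ℂ) := fun x => (Complex.conjCLE : ℂ →L[ℝ] ℂ).comp
    ((fderiv ℂ J x).restrictScalars ℝ)
  let w' : Cn 2 → (Cn 2 →L[ℝ] ℂ) := fun x =>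
    (φ (F x) : ℂ) • (starRingEnd ℂ (J x) • (fderiv ℂ V x).restrictScalars ℝ + V x • B x)
      + (starRingEnd ℂ (J x) * V x) • A x
  have hw : ∀ x ∈ K, HasFDerivAt w (w' x) x := by
    intro x hx
    have h1 : HasFDerivAt (fun x => (φ (F x) : ℂ)) (A x) x := by
      have h := ((hφs.differentiable one_ne_zero (F x)).hasFDerivAt.comp x (hFr x hx))
      exact Complex.ofRealCLM.hasFDerivAt.comp x h
    have h2 : HasFDerivAt (fun x => starRingEnd ℂ (J x)) (B x) x :=
      (Complex.conjCLE : ℂ →L[ℝ] ℂ).hasFDerivAt.comp x (hJr x hx)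
    exact h1.mul (h2.mul (hVr x hx))
  have hw'v : ∀ x v, w' x v = (φ (F x) : ℂ) * (starRingEnd ℂ (J x) * fderiv ℂ V x v
      + V x * starRingEnd ℂ (fderiv ℂ J x v)) + (starRingEnd ℂ (J x) * V x) *
        ((fderiv ℝ φ (F x) (fderiv ℂ F x v) : ℝ) : ℂ) := by
    intro x v
    simp [w', A, B]
    ring
  have hcF := hF.continuousOn
  have hcJ := hJ.continuousOn
  have hcV := hV.continuousOn
  have hcdF := hF.fderiv.continuousOn
  have hcdJ := hJ.fderiv.continuousOn
  have hcdV := hV.fderiv.continuousOn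
  have hcφ : ContinuousOn (fun x => φ (F x)) K := hφs.continuous.comp_continuousOn hcF
  have hcdφ : ContinuousOn (fun x => fderiv ℝ φ (F x)) K :=
    (hφs.continuous_fderiv one_ne_zero).comp_continuousOn hcF
  have hc : ∀ v, ContinuousOn (fun x => w' x v) K := by
    intro v
    simp only [hw'v]
    have e1 : ContinuousOn (fun x => fderiv ℝ φ (F x) (fderiv ℂ F x v)) K :=
      hcdφ.clm_apply (hcdF.clm_apply continuousOn_const)
    have e2 : ContinuousOn (fun x => fderiv ℂ V x v) K := hcdV.clm_apply continuousOn_const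
    have e3 : ContinuousOn (fun x => fderiv ℂ J x v) K := hcdJ.clm_apply continuousOn_const
    have e4 : ContinuousOn (fun x => starRingEnd ℂ (J x)) K :=
      Complex.continuous_conj.comp_continuousOn hcJ
    have e5 : ContinuousOn (fun x => starRingEnd ℂ (fderiv ℂ J x v)) K :=
      Complex.continuous_conj.comp_continuousOn e3
    have e6 : ContinuousOn (fun x => (φ (F x) : ℂ)) K :=
      Complex.continuous_ofReal.comp_continuousOn hcφ
    have e7 := Complex.continuous_ofReal.comp_continuousOn e1
    exact (e6.mul ((e4.mul e2).add (hcV.mul e5))).add ((e4.mul hcV).mul e7)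
  have hs0 : ∀ x ∈ sphere (0 : Cn 2) r, w =ᶠ[𝓝 x] 0 := by
    intro x hx
    filter_upwards [phi_vanish F φ hF hφ hs x hx] with y hy
    simp [w, hy]
  have i1 := zero_int w w' e hw (hc e) hs0
  have i2 := zero_int w w' (Complex.I • e) hw (hc _) hs0
  have int : ∀ v, IntegrableOn (fun x => w' x v) (ball (0 : Cn 2) r) := fun v =>
    ((hc v).integrableOn_compact hK).mono_set ball_subset_closedBall
  have key : (fun x => (((fderiv ℝ φ (F x) (fderiv ℂ F x e) : ℝ) : ℂ)
        - Complex.I * ((fderiv ℝ φ (F x) (Complex.I • fderiv ℂ F x e) : ℝ) : ℂ))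
          * (starRingEnd ℂ (J x) * V x)
        + 2 * (φ (F x) : ℂ) * starRingEnd ℂ (J x) * fderiv ℂ V x e)
      = fun x => w' x e - Complex.I * w' x (Complex.I • e) := by
    funext x
    simp only [hw'v, map_smul, smul_eq_mul, map_mul, Complex.conj_I]
    linear_combination (-(φ (F x) : ℂ) * V x * starRingEnd ℂ (fderiv ℂ J x e)
      + (φ (F x) : ℂ) * starRingEnd ℂ (J x) * fderiv ℂ V x e) * Complex.I_sq
  rw [key]
  refine ⟨(int e).sub ((int _).const_mul _), ?_⟩
  rw [integral_sub (int e) ((int _).const_mul _), integral_const_mul, i1, i2]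
  simp

/-- partial derivative `∂_k F_a`. -/
def pd (F : Cn 2 → Cn 2) (a k : Fin 2) (x : Cn 2) : ℂ := fderiv ℂ F x (Pi.single k 1) a

/-- complex Jacobian determinant -/
def Jac (F : Cn 2 → Cn 2) (x : Cn 2) : ℂ := pd F 0 0 x * pd F 1 1 x - pd F 0 1 x * pd F 1 0 x

/-- derivative of the Jacobian in direction `g` -/
def Jdot (F g : Cn 2 → Cn 2) (x : Cn 2) : ℂ :=
  pd F 0 0 x * pd g 1 1 x + pd g 0 0 x * pd F 1 1 x
    - pd F 0 1 x * pd g 1 0 x - pd g 0 1 x * pd F 1 0 x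

lemma pd_an {F : Cn 2 → Cn 2} {s : Set (Cn 2)} (hF : AnalyticOnNhd ℂ F s) (a k : Fin 2) :
    AnalyticOnNhd ℂ (pd F a k) s := by
  intro x hx
  have h := (hF x hx).fderiv
  have h2 : AnalyticAt ℂ (fun x => fderiv ℂ F x (Pi.single k 1)) x :=
    ((ContinuousLinearMap.apply ℂ (Cn 2) (Pi.single k 1 : Cn 2)).analyticAt _).comp h
  exact (ContinuousLinearMap.proj (R := ℂ) (φ := fun _ : Fin 2 => ℂ) a).analyticAt _ |>.comp h2

lemma comp_an {F : Cn 2 → Cn 2} {s : Set (Cn 2)} (hF : AnalyticOnNhd ℂ F s) (a : Fin 2) :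
    AnalyticOnNhd ℂ (fun x => F x a) s := by
  intro x hx
  exact (ContinuousLinearMap.proj (R := ℂ) (φ := fun _ : Fin 2 => ℂ) a).analyticAt _ |>.comp (hF x hx)

lemma fderiv_comp_apply {F : Cn 2 → Cn 2} {x : Cn 2} (hF : AnalyticAt ℂ F x) (a k : Fin 2) :
    fderiv ℂ (fun x => F x a) x (Pi.single k 1) = pd F a k x := by
  have h := hF.differentiableAt.hasFDerivAt
  have h2 := (ContinuousLinearMap.proj (R := ℂ) (φ := fun _ : Fin 2 => ℂ) a).hasFDerivAt.comp x h
  have h3 : HasFDerivAt (fun x => F x a) ((ContinuousLinearMap.proj (R := ℂ) (φ := fun _ : Fin 2 => ℂ) a).comp (fderiv ℂ F x)) x := h2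
  rw [h3.fderiv]; rfl

lemma fderiv_pd {F : Cn 2 → Cn 2} {x : Cn 2} (hF : AnalyticAt ℂ F x) (a k : Fin 2) (v : Cn 2) :
    fderiv ℂ (pd F a k) x v = fderiv ℂ (fderiv ℂ F) x v (Pi.single k 1) a := by
  have h := hF.fderiv.differentiableAt.hasFDerivAt
  have h1 := h.clm_apply (hasFDerivAt_const (Pi.single k 1 : Cn 2) x)
  have h2 := (ContinuousLinearMap.proj (R := ℂ) (φ := fun _ : Fin 2 => ℂ) a).hasFDerivAt.comp x h1
  have h3 : HasFDerivAt (pd F a k) _ x := h2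
  rw [h3.fderiv]; simp

lemma pd_symm {F : Cn 2 → Cn 2} {x : Cn 2} (hF : AnalyticAt ℂ F x) (a k l : Fin 2) :
    fderiv ℂ (pd F a k) x (Pi.single l 1) = fderiv ℂ (pd F a l) x (Pi.single k 1) := by
  rw [fderiv_pd hF, fderiv_pd hF]
  have := (hF.contDiffAt (n := ⊤)).isSymmSndFDerivAt_of_omega
  rw [this.eq]

lemma psi_lin (L : Cn 2 →L[ℝ] ℝ) (c : ℂ) (z : Cn 2) :
    ((L (c • z) : ℝ) : ℂ) - Complex.I * ((L (Complex.I • c • z) : ℝ) : ℂ)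
      = c * (((L z : ℝ) : ℂ) - Complex.I * ((L (Complex.I • z) : ℝ) : ℂ)) := by
  have h1 : c • z = c.re • z + c.im • (Complex.I • z) := by
    ext i
    simp only [Pi.smul_apply, Pi.add_apply, smul_eq_mul, Complex.real_smul]
    nth_rewrite 1 [← Complex.re_add_im c]; ring
  have h2 : Complex.I • c • z = c.re • (Complex.I • z) - c.im • z := by
    ext i
    simp only [Pi.smul_apply, Pi.sub_apply, smul_eq_mul, Complex.real_smul]
    nth_rewrite 1 [← Complex.re_add_im c]
    linear_combination (c.im * z i : ℂ) * Complex.I_sq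
  have h3 : ∀ (a : ℝ) (y : Cn 2), L (a • y) = a * L y := fun a y => by
    rw [map_smul, smul_eq_mul]
  rw [h2, h1, map_add, map_sub, h3, h3, h3, h3]
  push_cast
  nth_rewrite 5 [← Complex.re_add_im c]
  linear_combination (c.im * (L (Complex.I • z)) : ℂ) * Complex.I_sq

lemma psi_add (L : Cn 2 →L[ℝ] ℝ) (y z : Cn 2) :
    ((L (y + z) : ℝ) : ℂ) - Complex.I * ((L (Complex.I • (y + z)) : ℝ) : ℂ)
      = (((L y : ℝ) : ℂ) - Complex.I * ((L (Complex.I • y) : ℝ) : ℂ))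
       + (((L z : ℝ) : ℂ) - Complex.I * ((L (Complex.I • z) : ℝ) : ℂ)) := by
  rw [smul_add, map_add, map_add]; push_cast; ring

lemma jac_an {F : Cn 2 → Cn 2} {s : Set (Cn 2)} (hF : AnalyticOnNhd ℂ F s) :
    AnalyticOnNhd ℂ (Jac F) s :=
  ((pd_an hF 0 0).mul (pd_an hF 1 1)).sub ((pd_an hF 0 1).mul (pd_an hF 1 0))

lemma div_zero' {r c : ℝ} (F g : Cn 2 → Cn 2) (φ : Cn 2 → ℝ)
    (hF : AnalyticOnNhd ℂ F (closedBall 0 r)) (hg : AnalyticOnNhd ℂ g (closedBall 0 r))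
    (hφs : ContDiff ℝ 1 φ)
    (hφ : ∀ y, c ≤ ‖y‖ → φ y = 0) (hs : ∀ x ∈ sphere (0 : Cn 2) r, c < ‖F x‖) :
    ∫ x in ball (0 : Cn 2) r,
      (fderiv ℝ φ (F x) (g x) * Complex.normSq (Jac F x)
        + φ (F x) * (2 * (starRingEnd ℂ (Jac F x) * Jdot F g x).re)) = 0 := by
  have g0 := comp_an hg 0
  have g1 := comp_an hg 1
  let V0 : Cn 2 → ℂ := (fun x => g x 0) * pd F 1 1 - (fun x => g x 1) * pd F 0 1
  let V1 : Cn 2 → ℂ := (fun x => g x 1) * pd F 0 0 - (fun x => g x 0) * pd F 1 0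
  have hV0 : AnalyticOnNhd ℂ V0 (closedBall 0 r) := (g0.mul (pd_an hF 1 1)).sub (g1.mul (pd_an hF 0 1))
  have hV1 : AnalyticOnNhd ℂ V1 (closedBall 0 r) := (g1.mul (pd_an hF 0 0)).sub (g0.mul (pd_an hF 1 0))
  obtain ⟨a0, b0⟩ := wirt F φ (Jac F) V0 (Pi.single 0 1) hF (jac_an hF) hV0 hφs hφ hs
  obtain ⟨a1, b1⟩ := wirt F φ (Jac F) V1 (Pi.single 1 1) hF (jac_an hF) hV1 hφs hφ hs
  have hsum := integral_add a0 a1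
  rw [b0, b1, add_zero] at hsum
  have hre := congrArg Complex.re hsum
  have hre2 := integral_re (a0.add a1)
  simp only [RCLike.re_to_complex] at hre2
  simp only [Pi.add_apply] at hre2
  rw [← hre2] at hre
  simp only [Complex.zero_re] at hre
  rw [← hre]
  apply setIntegral_congr_fun measurableSet_ball
  intro x hx
  have hxK := ball_subset_closedBall hx
  have d : ∀ (u v p q : Cn 2 → ℂ) (e : Cn 2), DifferentiableAt ℂ u x → DifferentiableAt ℂ v x →
     DifferentiableAt ℂ p x → DifferentiableAt ℂ q x → fderiv ℂ (u * v - p * q) x e =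
      u x * fderiv ℂ v x e + v x * fderiv ℂ u x e - (p x * fderiv ℂ q x e + q x * fderiv ℂ p x e) := by
    intro u v p q e hu hv hp hq
    rw [fderiv_sub (hu.mul hv) (hp.mul hq), fderiv_mul hu hv, fderiv_mul hp hq]
    simp
  have dg0 := (g0 x hxK).differentiableAt
  have dg1 := (g1 x hxK).differentiableAt
  have dp := fun a k => (pd_an hF a k x hxK).differentiableAt
  have e0 := d _ _ _ _ (Pi.single 0 1) dg0 (dp 1 1) dg1 (dp 0 1)
  have e1 := d _ _ _ _ (Pi.single 1 1) dg1 (dp 0 0) dg0 (dp 1 0)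
  rw [fderiv_comp_apply (hg x hxK), fderiv_comp_apply (hg x hxK)] at e0 e1
  rw [pd_symm (hF x hxK) 0 0 1, pd_symm (hF x hxK) 1 0 1] at e1
  have hdiv : fderiv ℂ V0 x (Pi.single 0 1) + fderiv ℂ V1 x (Pi.single 1 1) = Jdot F g x := by
    simp only [V0, V1]
    rw [e0, e1, Jdot]; ring
  have hVF : V0 x • fderiv ℂ F x (Pi.single 0 1) + V1 x • fderiv ℂ F x (Pi.single 1 1)
      = Jac F x • g x := by
    ext i
    fin_cases i
    · change V0 x * pd F 0 0 x + V1 x * pd F 0 1 x = Jac F x * g x 0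
      simp only [V0, V1, Jac, Pi.sub_apply, Pi.mul_apply]; ring
    · change V0 x * pd F 1 0 x + V1 x * pd F 1 1 x = Jac F x * g x 1
      simp only [V0, V1, Jac, Pi.sub_apply, Pi.mul_apply]; ring
  have hψ := psi_add (fderiv ℝ φ (F x)) (V0 x • fderiv ℂ F x (Pi.single 0 1))
    (V1 x • fderiv ℂ F x (Pi.single 1 1))
  rw [hVF, psi_lin, psi_lin, psi_lin] at hψ
  have hN : starRingEnd ℂ (Jac F x) * Jac F x = (Complex.normSq (Jac F x) : ℂ) :=
    (Complex.normSq_eq_conj_mul_self).symm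
  have tot : ∀ P Q R : ℂ, P * (starRingEnd ℂ (Jac F x) * V0 x) + 2 * (φ (F x) : ℂ) * starRingEnd ℂ (Jac F x) * fderiv ℂ V0 x (Pi.single 0 1)
     + (Q * (starRingEnd ℂ (Jac F x) * V1 x) + 2 * (φ (F x) : ℂ) * starRingEnd ℂ (Jac F x) * fderiv ℂ V1 x (Pi.single 1 1))
     = starRingEnd ℂ (Jac F x) * (V0 x * P + V1 x * Q) + ((2 * φ (F x) : ℝ) : ℂ) * (starRingEnd ℂ (Jac F x) * Jdot F g x) := by
    intro P Q R
    rw [← hdiv]; push_cast; ring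
  simp only []
  rw [tot _ _ 0, ← hψ, ← mul_assoc (starRingEnd ℂ (Jac F x)) (Jac F x), hN, Complex.add_re, Complex.re_ofReal_mul, Complex.re_ofReal_mul]
  simp
  ring

lemma pd_add_smul {f g : Cn 2 → Cn 2} {x : Cn 2} (hf : AnalyticAt ℂ f x) (hg : AnalyticAt ℂ g x)
    (t : ℂ) (a k : Fin 2) :
    pd (fun x => f x + t • g x) a k x = pd f a k x + t * pd g a k x := by
  have h := hf.differentiableAt.hasFDerivAt.add (hg.differentiableAt.hasFDerivAt.const_smul t)
  have h' : HasFDerivAt (fun x => f x + t • g x) (fderiv ℂ f x + t • fderiv ℂ g x) x := h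
  simp only [pd, h'.fderiv]
  simp

lemma homotopy {r c : ℝ} (f g : Cn 2 → Cn 2) (φ : Cn 2 → ℝ)
    (hf : AnalyticOnNhd ℂ f (closedBall 0 r)) (hg : AnalyticOnNhd ℂ g (closedBall 0 r))
    (hφs : ContDiff ℝ 1 φ)
    (hφ : ∀ y, c ≤ ‖y‖ → φ y = 0)
    (hs : ∀ t ∈ Icc (0 : ℝ) 1, ∀ x ∈ sphere (0 : Cn 2) r, c < ‖f x + (t : ℂ) • g x‖) :
    ∫ x in ball (0 : Cn 2) r, φ (f x) * Complex.normSq (Jac f x)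
      = ∫ x in ball (0 : Cn 2) r, φ (f x + g x) * Complex.normSq (Jac (fun x => f x + g x) x) := by
  set K := closedBall (0 : Cn 2) r with hKdef
  have hK : IsCompact K := isCompact_closedBall 0 r
  let H : ℝ → Cn 2 → Cn 2 := fun t x => f x + (t : ℂ) • g x
  let P : ℝ → Cn 2 → ℂ := fun t x => Jac f x + t * Jdot f g x + t ^ 2 * Jac g x
  let P' : ℝ → Cn 2 → ℂ := fun t x => Jdot f g x + 2 * t * Jac g x
  have hP : ∀ t, ∀ x ∈ K, Jac (H t) x = P t x := by
    intro t x hx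
    simp only [H, P, Jac, Jdot, pd_add_smul (hf x hx) (hg x hx)]; ring
  have hP' : ∀ t, ∀ x ∈ K, Jdot (H t) g x = P' t x := by
    intro t x hx
    simp only [H, P', Jac, Jdot, pd_add_smul (hf x hx) (hg x hx)]; ring
  let G : ℝ → Cn 2 → ℝ := fun t x => φ (H t x) * Complex.normSq (P t x)
  let G' : ℝ → Cn 2 → ℝ := fun t x => fderiv ℝ φ (H t x) (g x) * Complex.normSq (P t x)
        + φ (H t x) * (2 * (starRingEnd ℂ (P t x) * P' t x).re)
  have hder : ∀ x t, HasDerivAt (fun t => G t x) (G' t x) t := by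
    intro x t
    have h0 : HasDerivAt (fun t : ℝ => (t : ℂ)) 1 t := Complex.ofRealCLM.hasDerivAt
    have h1 : HasDerivAt (fun t => H t x) (g x) t := by
      have := (h0.smul_const (g x)).const_add (f x)
      refine this.congr_deriv ?_
      simp
    have h2 : HasDerivAt (fun t => φ (H t x)) (fderiv ℝ φ (H t x) (g x)) t :=
      (hφs.differentiable one_ne_zero (H t x)).hasFDerivAt.comp_hasDerivAt t h1
    have h3 : HasDerivAt (fun t => P t x) (P' t x) t := by
      have := ((h0.mul_const (Jdot f g x)).const_add (Jac f x)).add ((h0.pow 2).mul_const (Jac g x))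
      refine this.congr_deriv ?_
      simp [P']
    have h4 : HasDerivAt (fun t => Complex.normSq (P t x)) (2 * (starRingEnd ℂ (P t x) * P' t x).re) t := by
      have hr : HasDerivAt (fun t => (P t x).re) (P' t x).re t :=
        Complex.reCLM.hasFDerivAt.comp_hasDerivAt t h3
      have hi : HasDerivAt (fun t => (P t x).im) (P' t x).im t :=
        Complex.imCLM.hasFDerivAt.comp_hasDerivAt t h3
      have := (hr.mul hr).add (hi.mul hi)
      refine this.congr_deriv ?_
      simp [Complex.mul_re]; ring
    exact h2.mul h4
  have hcf := hf.continuousOn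
  have hcg := hg.continuousOn
  have cpd : ∀ (F : Cn 2 → Cn 2), AnalyticOnNhd ℂ F K → ∀ a k, ContinuousOn (pd F a k) K :=
    fun F hF a k => (pd_an hF a k).continuousOn
  have cA : ContinuousOn (Jac f) K := (jac_an hf).continuousOn
  have cC : ContinuousOn (Jac g) K := (jac_an hg).continuousOn
  have cB : ContinuousOn (Jdot f g) K := by
    have a := cpd f hf
    have b := cpd g hg
    exact ((((a 0 0).mul (b 1 1)).add ((b 0 0).mul (a 1 1))).sub ((a 0 1).mul (b 1 0))).sub
      ((b 0 1).mul (a 1 0))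
  have S : Set.MapsTo (Prod.snd : ℝ × Cn 2 → Cn 2) (Icc (-1 : ℝ) 2 ×ˢ K) K := fun z hz => hz.2
  have lift : ∀ {Z : Type} [TopologicalSpace Z] (u : Cn 2 → Z), ContinuousOn u K →
      ContinuousOn (fun z : ℝ × Cn 2 => u z.2) (Icc (-1 : ℝ) 2 ×ˢ K) := fun u hu =>
    hu.comp continuous_snd.continuousOn S
  have ct : ContinuousOn (fun z : ℝ × Cn 2 => (z.1 : ℂ)) (Icc (-1 : ℝ) 2 ×ˢ K) :=
    (Complex.continuous_ofReal.comp continuous_fst).continuousOn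
  have cH : ContinuousOn (fun z : ℝ × Cn 2 => H z.1 z.2) (Icc (-1 : ℝ) 2 ×ˢ K) :=
    (lift f hcf).add (ct.smul (lift g hcg))
  have cP : ContinuousOn (fun z : ℝ × Cn 2 => P z.1 z.2) (Icc (-1 : ℝ) 2 ×ˢ K) :=
    ((lift _ cA).add (ct.mul (lift _ cB))).add ((ct.pow 2).mul (lift _ cC))
  have cP' : ContinuousOn (fun z : ℝ × Cn 2 => P' z.1 z.2) (Icc (-1 : ℝ) 2 ×ˢ K) :=
    (lift _ cB).add ((continuousOn_const.mul ct).mul (lift _ cC))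
  have cφ := hφs.continuous.comp_continuousOn cH
  have cdφ := (hφs.continuous_fderiv one_ne_zero).comp_continuousOn cH
  have cN := Complex.continuous_normSq.comp_continuousOn cP
  have cG : ContinuousOn (fun z : ℝ × Cn 2 => G z.1 z.2) (Icc (-1 : ℝ) 2 ×ˢ K) := cφ.mul cN
  have cG' : ContinuousOn (fun z : ℝ × Cn 2 => G' z.1 z.2) (Icc (-1 : ℝ) 2 ×ˢ K) :=
    ((cdφ.clm_apply (lift _ hcg)).mul cN).add (cφ.mul (continuousOn_const.mul
      (Complex.continuous_re.comp_continuousOn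
        ((Complex.continuous_conj.comp_continuousOn cP).mul cP'))))
  have slice : ∀ (u : ℝ → Cn 2 → ℝ),
      ContinuousOn (fun z : ℝ × Cn 2 => u z.1 z.2) (Icc (-1 : ℝ) 2 ×ˢ K) →
      ∀ t ∈ Icc (-1 : ℝ) 2, IntegrableOn (u t) (ball (0 : Cn 2) r) := by
    intro u hu t ht
    have : ContinuousOn (u t) K := hu.comp (f := fun x => (t, x)) (by fun_prop) (fun x hx => ⟨ht, hx⟩)
    exact (this.integrableOn_compact hK).mono_set ball_subset_closedBall
  obtain ⟨M, hM⟩ := (isCompact_Icc.prod hK).exists_bound_of_continuousOn cG'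
  have hI : ∀ t ∈ Icc (0 : ℝ) 1,
      HasDerivAt (fun t => ∫ x in ball (0 : Cn 2) r, G t x) 0 t := by
    intro t ht
    have hnear : Icc (-1 : ℝ) 2 ∈ 𝓝 t := Icc_mem_nhds (by linarith [ht.1]) (by linarith [ht.2])
    have htt : t ∈ Icc (-1 : ℝ) 2 := mem_of_mem_nhds hnear
    have h := hasDerivAt_integral_of_dominated_loc_of_deriv_le (𝕜 := ℝ)
      (μ := volume.restrict (ball (0 : Cn 2) r)) (F := G) (F' := G') (x₀ := t) (bound := fun _ => M)
      hnear
      (by filter_upwards [hnear] with s hs using (slice G cG s hs).aestronglyMeasurable)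
      (slice G cG t htt) (slice G' cG' t htt).aestronglyMeasurable
      (by
        filter_upwards [ae_restrict_mem measurableSet_ball] with x hx s hs
        exact hM (s, x) ⟨hs, ball_subset_closedBall hx⟩)
      (integrableOn_const measure_ball_lt_top.ne)
      (Eventually.of_forall fun x s _ => hder x s)
    have hz : ∫ x in ball (0 : Cn 2) r, G' t x = 0 := by
      have hHan : AnalyticOnNhd ℂ (H t) K := hf.add (fun x hx => (hg x hx).const_smul (c := (t : ℂ)))
      rw [← div_zero' (H t) g φ hHan hg hφs hφ (hs t ht)]
      apply setIntegral_congr_fun measurableSet_ball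
      intro x hx
      have hxK : x ∈ K := ball_subset_closedBall hx
      simp only [G', hP t x hxK, hP' t x hxK]
    rw [hz] at h
    exact h.2
  have hconst := constant_of_has_deriv_right_zero (f := fun t => ∫ x in ball (0 : Cn 2) r, G t x)
    (a := 0) (b := 1) (fun t ht => (hI t ht).continuousAt.continuousWithinAt)
    (fun t ht => (hI t (Ico_subset_Icc_self ht)).hasDerivWithinAt) 1 (by simp)
  have e0 : ∫ x in ball (0 : Cn 2) r, G 0 x = ∫ x in ball (0 : Cn 2) r, φ (f x) * Complex.normSq (Jac f x) := by
    simp [G, H, P]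
  have e1 : ∫ x in ball (0 : Cn 2) r, G 1 x = ∫ x in ball (0 : Cn 2) r, φ (f x + g x) * Complex.normSq (Jac (fun x => f x + g x) x) := by
    apply setIntegral_congr_fun measurableSet_ball
    intro x hx
    have := hP 1 x (ball_subset_closedBall hx)
    simp only [G, ← this]
    simp [H]
  rw [← e0, ← e1]
  exact hconst.symm

lemma jac_eq_det (F : Cn 2 → Cn 2) (x : Cn 2) :
    Jac F x = LinearMap.det (fderiv ℂ F x : Cn 2 →ₗ[ℂ] Cn 2) := by
  rw [← LinearMap.det_toMatrix', Matrix.det_fin_two]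
  simp only [Jac, pd, LinearMap.toMatrix'_apply, ContinuousLinearMap.coe_coe]

lemma det_real (F : Cn 2 → Cn 2) (x : Cn 2) :
    ((fderiv ℂ F x).restrictScalars ℝ).det = Complex.normSq (Jac F x) := by
  rw [jac_eq_det, ← Algebra.norm_complex_apply, ← LinearMap.det_restrictScalars]
  rfl

lemma bij_iff (F : Cn 2 → Cn 2) (x : Cn 2) :
    Function.Bijective (fderiv ℂ F x) ↔ Jac F x ≠ 0 := by
  rw [jac_eq_det, ← isUnit_iff_ne_zero, ← LinearMap.isUnit_iff_isUnit_det,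
    Module.End.isUnit_iff]
  rfl

lemma local_sheet {F : Cn 2 → Cn 2} {x : Cn 2} (hF : AnalyticAt ℂ F x)
    (hb : Function.Bijective (fderiv ℂ F x)) (W : Set (Cn 2)) (hW : W ∈ 𝓝 x) :
    ∃ U : Set (Cn 2), IsOpen U ∧ x ∈ U ∧ U ⊆ W ∧ InjOn F U ∧ F '' U ∈ 𝓝 (F x) := by
  let L : Cn 2 ≃L[ℂ] Cn 2 := ContinuousLinearEquiv.ofBijective (fderiv ℂ F x)
    (LinearMap.ker_eq_bot.2 hb.1) (LinearMap.range_eq_top.2 hb.2)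
  have hL : HasStrictFDerivAt F (L : Cn 2 →L[ℂ] Cn 2) x := by
    have hLe : (L : Cn 2 →L[ℂ] Cn 2) = fderiv ℂ F x := by ext; rfl
    rw [hLe]
    exact hF.hasStrictFDerivAt
  let e := hL.toOpenPartialHomeomorph F
  obtain ⟨V, hVW, hVo, hxV⟩ := _root_.mem_nhds_iff.1 hW
  have hxe : x ∈ e.source := hL.mem_toOpenPartialHomeomorph_source
  refine ⟨e.source ∩ V, e.open_source.inter hVo, ⟨hxe, hxV⟩, fun y hy => hVW hy.2, ?_, ?_⟩
  · have := e.injOn.mono (inter_subset_left (t := V))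
    simpa [e] using this
  · rw [← hL.map_nhds_eq_of_equiv]
    exact image_mem_map ((e.open_source.inter hVo).mem_nhds ⟨hxe, hxV⟩)

lemma sheets {r : ℝ} {F : Cn 2 → Cn 2} (hF : AnalyticOnNhd ℂ F (closedBall 0 r))
    (S : Finset (Cn 2)) (hS : ∀ x ∈ S, x ∈ ball (0 : Cn 2) r ∧ F x = 0 ∧
      Function.Bijective (fderiv ℂ F x)) :
    ∃ U : Cn 2 → Set (Cn 2), ∃ ε > 0, (∀ x ∈ S, IsOpen (U x) ∧ x ∈ U x ∧ U x ⊆ ball 0 r ∧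
      InjOn F (U x) ∧ ball 0 ε ⊆ F '' U x) ∧ (S : Set (Cn 2)).PairwiseDisjoint U := by
  obtain ⟨W, hW, hWd⟩ := S.finite_toSet.t2_separation
  have h : ∀ x : Cn 2, ∃ U : Set (Cn 2), x ∈ S → IsOpen U ∧ x ∈ U ∧ U ⊆ W x ∩ ball 0 r ∧ InjOn F U ∧
      F '' U ∈ 𝓝 (0 : Cn 2) := by
    intro x
    by_cases hx : x ∈ S
    · obtain ⟨h1, h2, h3⟩ := hS x hx
      obtain ⟨U, hU⟩ := local_sheet (hF x (ball_subset_closedBall h1)) h3 (W x ∩ ball 0 r)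
        (inter_mem ((hW x).2.mem_nhds (hW x).1) (isOpen_ball.mem_nhds h1))
      rw [h2] at hU
      exact ⟨U, fun _ => hU⟩
    · exact ⟨∅, fun h => absurd h hx⟩
  choose U hU using h
  have hIntegr : (⋂ x ∈ S, F '' U x) ∈ 𝓝 (0 : Cn 2) :=
    (Filter.biInter_finset_mem S).2 fun x hx => (hU x hx).2.2.2.2
  obtain ⟨ε, hε, hεs⟩ := Metric.mem_nhds_iff.1 hIntegr
  refine ⟨U, ε, hε, fun x hx => ?_, ?_⟩
  · obtain ⟨a, b, c, d, e⟩ := hU x hx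
    exact ⟨a, b, fun y hy => (c hy).2, d, hεs.trans (biInter_subset_of_mem hx)⟩
  · intro x hx y hy hxy
    exact (hWd hx hy hxy).mono (fun z hz => ((hU x hx).2.2.1 hz).1)
      (fun z hz => ((hU y hy).2.2.1 hz).1)

lemma sheet_int {F : Cn 2 → Cn 2} {U : Set (Cn 2)} (hF : AnalyticOnNhd ℂ F U) (hU : IsOpen U)
    (hi : InjOn F U) {ε : ℝ} (hε : ball 0 ε ⊆ F '' U) (φ : Cn 2 → ℝ)
    (hφ : ∀ y, ε ≤ ‖y‖ → φ y = 0) :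
    ∫ x in U, φ (F x) * Complex.normSq (Jac F x) = ∫ y, φ y := by
  have h := integral_image_eq_integral_abs_det_fderiv_smul (volume : Measure (Cn 2)) hU.measurableSet
    (f := F) (f' := fun x => (fderiv ℂ F x).restrictScalars ℝ)
    (fun x hx => ((hF x hx).differentiableAt.hasFDerivAt.restrictScalars ℝ).hasFDerivWithinAt) hi φ
  have h2 : ∫ y in F '' U, φ y = ∫ y, φ y := by
    apply setIntegral_eq_integral_of_forall_compl_eq_zero
    intro y hy
    apply hφ
    by_contra hlt
    exact hy (hε (by simpa using hlt))
  rw [← h2, h]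
  apply setIntegral_congr_fun hU.measurableSet
  intro x hx
  simp only [det_real, abs_of_nonneg (Complex.normSq_nonneg _), smul_eq_mul]
  ring

lemma count {r : ℝ} {F : Cn 2 → Cn 2} (hF : AnalyticOnNhd ℂ F (closedBall 0 r))
    (S : Finset (Cn 2)) (hS : ∀ x ∈ S, x ∈ ball (0 : Cn 2) r ∧ F x = 0 ∧
      Function.Bijective (fderiv ℂ F x)) :
    ∃ ε > 0, ∀ φ : Cn 2 → ℝ, Continuous φ → (∀ y, 0 ≤ φ y) → (∀ y, ε ≤ ‖y‖ → φ y = 0) →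
      S.card * ∫ y, φ y ≤ ∫ x in ball (0 : Cn 2) r, φ (F x) * Complex.normSq (Jac F x) ∧
      ((∀ x ∈ closedBall (0 : Cn 2) r, F x = 0 → x ∈ S) →
        S.card * ∫ y, φ y = ∫ x in ball (0 : Cn 2) r, φ (F x) * Complex.normSq (Jac F x)) := by
  obtain ⟨U, ε, hε, hU, hd⟩ := sheets hF S hS
  have hUo : IsOpen (⋃ x ∈ S, U x) := isOpen_biUnion fun x hx => (hU x hx).1
  have hUb : (⋃ x ∈ S, U x) ⊆ ball (0 : Cn 2) r := iUnion₂_subset fun x hx => (hU x hx).2.2.1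
  have hcF := hF.continuousOn
  have hK : IsCompact (closedBall (0 : Cn 2) r) := isCompact_closedBall 0 r
  have hIntegr : ∀ φ : Cn 2 → ℝ, Continuous φ →
      IntegrableOn (fun x => φ (F x) * Complex.normSq (Jac F x)) (ball (0 : Cn 2) r) := by
    intro φ hφ
    have : ContinuousOn (fun x => φ (F x) * Complex.normSq (Jac F x)) (closedBall 0 r) :=
      (hφ.comp_continuousOn hcF).mul
        (Complex.continuous_normSq.comp_continuousOn (jac_an hF).continuousOn)
    exact (this.integrableOn_compact hK).mono_set ball_subset_closedBall
  have hsum : ∀ φ : Cn 2 → ℝ, Continuous φ → (∀ y, ε ≤ ‖y‖ → φ y = 0) →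
      ∫ x in ⋃ x ∈ S, U x, φ (F x) * Complex.normSq (Jac F x) = S.card * ∫ y, φ y := by
    intro φ hφ h0
    rw [integral_biUnion_finset S (fun x hx => (hU x hx).1.measurableSet) hd
      (fun x hx => (hIntegr φ hφ).mono_set (hU x hx).2.2.1)]
    rw [Finset.sum_congr rfl (fun x hx => sheet_int
      (hF.mono ((hU x hx).2.2.1.trans ball_subset_closedBall)) (hU x hx).1 (hU x hx).2.2.2.1
      (hU x hx).2.2.2.2 φ h0)]
    simp
  by_cases hall : ∀ x ∈ closedBall (0 : Cn 2) r, F x = 0 → x ∈ S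
  · have hC : IsCompact (closedBall (0 : Cn 2) r \ ⋃ x ∈ S, U x) := hK.diff hUo
    obtain ⟨ε', hε', hmin⟩ : ∃ ε' > 0, ∀ x ∈ closedBall (0 : Cn 2) r \ ⋃ x ∈ S, U x, ε' ≤ ‖F x‖ := by
      rcases (closedBall (0 : Cn 2) r \ ⋃ x ∈ S, U x).eq_empty_or_nonempty with he | hne
      · exact ⟨1, one_pos, by simp [he]⟩
      · obtain ⟨z, hz, hzm⟩ := hC.exists_isMinOn hne (hcF.norm.mono sdiff_subset)
        refine ⟨‖F z‖, norm_pos_iff.2 fun h => ?_, fun x hx => hzm hx⟩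
        have hzS := hall z hz.1 h
        exact hz.2 (mem_biUnion hzS (hU z hzS).2.1)
    refine ⟨min ε ε', lt_min hε hε', fun φ hφ hpos h0 => ?_⟩
    have h1 := hsum φ hφ (fun y hy => h0 y ((min_le_left _ _).trans hy))
    have : ∫ x in ⋃ x ∈ S, U x, φ (F x) * Complex.normSq (Jac F x)
        = ∫ x in ball (0 : Cn 2) r, φ (F x) * Complex.normSq (Jac F x) := by
      symm
      apply setIntegral_eq_of_subset_of_forall_sdiff_eq_zero measurableSet_ball hUb
      intro x hx
      rw [h0, zero_mul]
      exact (min_le_right _ _).trans (hmin x ⟨ball_subset_closedBall hx.1, hx.2⟩)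
    rw [← this, h1]
    exact ⟨le_rfl, fun _ => rfl⟩
  · refine ⟨ε, hε, fun φ hφ hpos h0 => ⟨?_, fun h => absurd h hall⟩⟩
    rw [← hsum φ hφ h0]
    apply setIntegral_mono_set (hIntegr φ hφ)
    · exact Eventually.of_forall fun x => mul_nonneg (hpos _) (Complex.normSq_nonneg _)
    · exact hUb.eventuallyLE

lemma compare {r c : ℝ} (hc : 0 < c) {F G : Cn 2 → Cn 2}
    (hF : AnalyticOnNhd ℂ F (closedBall 0 r)) (hG : AnalyticOnNhd ℂ G (closedBall 0 r))
    (hs : ∀ t ∈ Icc (0 : ℝ) 1, ∀ x ∈ sphere (0 : Cn 2) r, c ≤ ‖F x + (t : ℂ) • (G x - F x)‖)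
    (S T : Finset (Cn 2)) (hS : ∀ x ∈ S, x ∈ ball (0 : Cn 2) r ∧ F x = 0 ∧
      Function.Bijective (fderiv ℂ F x)) (hSall : ∀ x ∈ closedBall (0 : Cn 2) r, F x = 0 → x ∈ S)
    (hT : ∀ x ∈ T, x ∈ ball (0 : Cn 2) r ∧ G x = 0 ∧ Function.Bijective (fderiv ℂ G x)) :
    T.card ≤ S.card := by
  obtain ⟨ε₁, hε₁, h1⟩ := count hF S hS
  obtain ⟨ε₂, hε₂, h2⟩ := count hG T hT
  set ε := min (c / 2) (min ε₁ ε₂) with hεdef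
  have hε : 0 < ε := lt_min (by positivity) (lt_min hε₁ hε₂)
  have hεc : ε < c := (min_le_left _ _).trans_lt (by linarith)
  let φ : ContDiffBump (0 : Cn 2) := ⟨ε / 2, ε, by positivity, by linarith⟩
  have h0 : ∀ y, ε ≤ ‖y‖ → φ y = 0 := fun y hy => φ.zero_of_le_dist (by simpa using hy)
  have a1 := (h1 φ φ.continuous (fun y => φ.nonneg) (fun y hy => h0 y
    (((min_le_right _ _).trans (min_le_left _ _)).trans hy))).2 hSall
  have a2 := (h2 φ φ.continuous (fun y => φ.nonneg) (fun y hy => h0 y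
    (((min_le_right _ _).trans (min_le_right _ _)).trans hy))).1
  have hh := homotopy (c := ε) F (fun x => G x - F x) φ hF (hG.sub hF) φ.contDiff h0
    (fun t ht x hx => hεc.trans_le (hs t ht x hx))
  simp only [add_sub_cancel] at hh
  have hpos : 0 < ∫ y, φ y := φ.integral_pos
  have : (T.card : ℝ) * ∫ y, φ y ≤ S.card * ∫ y, φ y := by
    rw [a1]
    exact a2.trans hh.symm.le
  exact_mod_cast le_of_mul_le_mul_right this hpos

lemma pos_min {K : Set (Cn 2)} (hK : IsCompact K) {F : Cn 2 → Cn 2} (hF : ContinuousOn F K)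
    (h0 : ∀ x ∈ K, F x ≠ 0) : ∃ c > 0, ∀ x ∈ K, c ≤ ‖F x‖ := by
  rcases K.eq_empty_or_nonempty with he | hne
  · exact ⟨1, one_pos, by simp [he]⟩
  · obtain ⟨z, hz, hzm⟩ := hK.exists_isMinOn hne hF.norm
    exact ⟨‖F z‖, norm_pos_iff.2 (h0 z hz), fun x hx => hzm hx⟩

lemma sard {r : ℝ} {f : Cn 2 → Cn 2} (hf : AnalyticOnNhd ℂ f (closedBall 0 r)) (ε : ℝ) (hε : 0 < ε) :
    ∃ q : Cn 2, ‖q‖ < ε ∧ IsRegularValueOn f (ball 0 r) q := by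
  set C : Set (Cn 2) := {x ∈ ball (0 : Cn 2) r | Jac f x = 0}
  have h : volume (f '' C) = 0 := by
    apply addHaar_image_eq_zero_of_det_fderivWithin_eq_zero (volume : Measure (Cn 2))
      (f' := fun x => (fderiv ℂ f x).restrictScalars ℝ)
    · intro x hx
      exact ((hf x (ball_subset_closedBall hx.1)).differentiableAt.hasFDerivAt.restrictScalars
        ℝ).hasFDerivWithinAt
    · intro x hx
      rw [det_real, hx.2]; simp
  have hb : 0 < volume (ball (0 : Cn 2) ε) := measure_ball_pos _ _ hε
  obtain ⟨q, hq, hqn⟩ : ∃ q ∈ ball (0 : Cn 2) ε, q ∉ f '' C := by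
    by_contra! hcon
    exact absurd (measure_mono_null hcon h) hb.ne'
  refine ⟨q, by simpa using hq, fun x hx hxq => ?_⟩
  rw [bij_iff]
  intro hJ
  exact hqn ⟨x, ⟨hx, hJ⟩, hxq⟩

lemma fiber_finite {r : ℝ} {f : Cn 2 → Cn 2} (hf : AnalyticOnNhd ℂ f (closedBall 0 r)) {q : Cn 2}
    (hq : IsRegularValueOn f (ball 0 r) q) (hs : ∀ x ∈ sphere (0 : Cn 2) r, f x ≠ q) :
    {x ∈ ball (0 : Cn 2) r | f x = q}.Finite ∧
      {x ∈ closedBall (0 : Cn 2) r | f x = q} = {x ∈ ball (0 : Cn 2) r | f x = q} := by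
  have heq : {x ∈ closedBall (0 : Cn 2) r | f x = q} = {x ∈ ball (0 : Cn 2) r | f x = q} := by
    ext x
    constructor
    · rintro ⟨h1, h2⟩
      refine ⟨?_, h2⟩
      rw [mem_closedBall] at h1
      rcases h1.lt_or_eq with h | h
      · exact h
      · exact absurd h2 (hs x h)
    · rintro ⟨h1, h2⟩
      exact ⟨ball_subset_closedBall h1, h2⟩
  refine ⟨?_, heq⟩
  have hcl : IsClosed (closedBall (0 : Cn 2) r ∩ f ⁻¹' {q}) :=
    hf.continuousOn.preimage_isClosed_of_isClosed isClosed_closedBall isClosed_singleton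
  have hcomp : IsCompact {x ∈ closedBall (0 : Cn 2) r | f x = q} :=
    (isCompact_closedBall (0 : Cn 2) r).of_isClosed_subset hcl (fun x hx => hx.1)
  rw [heq] at hcomp
  have hU : ∀ x, ∃ U : Set (Cn 2), x ∈ {x ∈ ball (0 : Cn 2) r | f x = q} → U ∈ 𝓝 x ∧ InjOn f U := by
    intro x
    by_cases hx : x ∈ {x ∈ ball (0 : Cn 2) r | f x = q}
    · obtain ⟨U, h1, h2, _, h4, _⟩ := local_sheet (hf x (ball_subset_closedBall hx.1))
        (hq x hx.1 hx.2) univ univ_mem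
      exact ⟨U, fun _ => ⟨h1.mem_nhds h2, h4⟩⟩
    · exact ⟨∅, fun h => absurd h hx⟩
  choose U hU using hU
  obtain ⟨t, ht, hsub⟩ := hcomp.elim_nhds_subcover U (fun x hx => (hU x hx).1)
  apply t.finite_toSet.subset
  intro y hy
  obtain ⟨x, hxt, hyx⟩ := mem_iUnion₂.1 (hsub hy)
  have hx := ht x hxt
  have : y = x := (hU x hx).2 hyx (mem_of_mem_nhds (hU x hx).1) (hy.2.trans hx.2.symm)
  rw [this]; exact hxt

lemma fiber_data {r : ℝ} {f : Cn 2 → Cn 2} (hf : AnalyticOnNhd ℂ f (closedBall 0 r)) {q : Cn 2}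
    (hq : IsRegularValueOn f (ball 0 r) q) (hs : ∀ x ∈ sphere (0 : Cn 2) r, f x ≠ q) :
    ∃ S : Finset (Cn 2), S.card = {x ∈ ball (0 : Cn 2) r | f x = q}.ncard ∧
      (∀ x ∈ S, x ∈ ball (0 : Cn 2) r ∧ f x - q = 0 ∧
        Function.Bijective (fderiv ℂ (fun x => f x - q) x)) ∧
      (∀ x ∈ closedBall (0 : Cn 2) r, f x - q = 0 → x ∈ S) := by
  obtain ⟨hfin, heq⟩ := fiber_finite hf hq hs
  refine ⟨hfin.toFinset, (ncard_eq_toFinset_card _ hfin).symm, ?_, ?_⟩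
  · intro x hx
    have hx' := hfin.mem_toFinset.1 hx
    refine ⟨hx'.1, sub_eq_zero.2 hx'.2, ?_⟩
    rw [fderiv_sub_const]
    exact hq x hx'.1 hx'.2
  · intro x hx h
    rw [hfin.mem_toFinset, ← heq]
    exact ⟨hx, sub_eq_zero.1 h⟩

lemma ncard_const {r c : ℝ} {f : Cn 2 → Cn 2} (hf : AnalyticOnNhd ℂ f (closedBall 0 r))
    (hs : ∀ x ∈ sphere (0 : Cn 2) r, c ≤ ‖f x‖) {p q : Cn 2} (hp : ‖p‖ < c) (hq : ‖q‖ < c)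
    (hpr : IsRegularValueOn f (ball 0 r) p) (hqr : IsRegularValueOn f (ball 0 r) q) :
    {x ∈ ball (0 : Cn 2) r | f x = q}.ncard ≤ {x ∈ ball (0 : Cn 2) r | f x = p}.ncard := by
  have hne : ∀ q : Cn 2, ‖q‖ < c → ∀ x ∈ sphere (0 : Cn 2) r, f x ≠ q := by
    intro q hq x hx h
    have := hs x hx
    rw [h] at this; linarith
  obtain ⟨S, hS1, hS2, hS3⟩ := fiber_data hf hpr (hne p hp)
  obtain ⟨T, hT1, hT2, hT3⟩ := fiber_data hf hqr (hne q hq)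
  rw [← hS1, ← hT1]
  refine compare (r := r) (c := c - max ‖p‖ ‖q‖) (by simp [hp, hq]) (F := fun x => f x - p)
    (G := fun x => f x - q) (hf.sub analyticOnNhd_const) (hf.sub analyticOnNhd_const) ?_ S T hS2 hS3 hT2
  intro t ht x hx
  have e : f x - p + (t : ℂ) • (f x - q - (f x - p)) = f x - ((1 - t : ℝ) • p + t • q) := by
    ext i
    simp only [Pi.add_apply, Pi.sub_apply, Pi.smul_apply, smul_eq_mul, Complex.real_smul]
    push_cast; ring
  rw [e]
  have h1 : ‖(1 - t : ℝ) • p + t • q‖ ≤ max ‖p‖ ‖q‖ := by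
    refine (norm_add_le _ _).trans ?_
    rw [norm_smul, norm_smul, Real.norm_of_nonneg (by linarith [ht.2]), Real.norm_of_nonneg ht.1]
    nlinarith [le_max_left ‖p‖ ‖q‖, le_max_right ‖p‖ ‖q‖, ht.1, ht.2]
  have h2 := norm_sub_norm_le (f x) ((1 - t : ℝ) • p + t • q)
  linarith [hs x hx]

lemma hasZeroOrder_exists {r : ℝ} (hr : 0 < r) {f : Cn 2 → Cn 2}
    (hf : AnalyticOnNhd ℂ f (closedBall 0 r)) (h0 : f 0 = 0)
    (hz : ∀ x ∈ closedBall (0 : Cn 2) r, f x = 0 → x = 0) : ∃ m, HasZeroOrder f 0 m := by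
  have hne : ∀ x ∈ sphere (0 : Cn 2) r, f x ≠ 0 := by
    intro x hx h
    have := hz x (sphere_subset_closedBall hx) h
    rw [this] at hx
    simp at hx
    exact hr.ne hx
  obtain ⟨c, hc, hcm⟩ := pos_min (isCompact_sphere (0 : Cn 2) r)
    (hf.continuousOn.mono sphere_subset_closedBall) hne
  obtain ⟨p, hp, hpr⟩ := sard hf c hc
  refine ⟨{x ∈ ball (0 : Cn 2) r | f x = p}.ncard, r, hr, hf, h0, hz, sard hf, c, hc, ?_⟩
  intro q hq hqr
  exact le_antisymm (ncard_const hf hcm hp hq hpr hqr) (ncard_const hf hcm hq hp hqr hpr)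

/-- deformation of `z ^ m` with distinct roots -/
def rootsProd (m : ℕ) (s z : ℂ) : ℂ := ∏ i ∈ Finset.range m, (z - s * i)

lemma rootsProd_zero (m : ℕ) (z : ℂ) : rootsProd m 0 z = z ^ m := by
  simp [rootsProd]

lemma rootsProd_root (m : ℕ) (s : ℂ) {i : ℕ} (hi : i < m) : rootsProd m s (s * i) = 0 :=
  Finset.prod_eq_zero (Finset.mem_range.2 hi) (sub_self _)

lemma rootsProd_cont (m : ℕ) : Continuous (fun z : ℂ × ℂ => rootsProd m z.1 z.2) := by
  unfold rootsProd
  fun_prop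

lemma rootsProd_eq (m : ℕ) (s : ℂ) : rootsProd m s =
    fun z => (∏ i ∈ Finset.range m, (X - C (s * (i : ℂ)))).eval z := by
  funext z
  simp [rootsProd, eval_prod]

lemma rootsProd_deriv (m : ℕ) (s : ℂ) (hs : s ≠ 0) {i : ℕ} (hi : i < m) :
    ∃ d : ℂ, d ≠ 0 ∧ HasDerivAt (rootsProd m s) d (s * i) := by
  have hsep : (∏ i ∈ Finset.range m, (X - C (s * (i : ℂ)))).Separable := by
    rw [separable_prod_X_sub_C_iff']
    intro x _ y _ h
    have := mul_left_cancel₀ hs h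
    exact_mod_cast this
  rw [rootsProd_eq]
  refine ⟨_, ?_, Polynomial.hasDerivAt _ _⟩
  have h0 : (∏ i ∈ Finset.range m, (X - C (s * (i : ℂ)))).eval₂ (RingHom.id ℂ) (s * i) = 0 := by
    rw [← Polynomial.eval]
    have := rootsProd_root m s hi
    rwa [rootsProd_eq] at this
  exact hsep.eval₂_derivative_ne_zero (RingHom.id ℂ) h0

lemma rootsProd_an (m : ℕ) (s : ℂ) (k : Fin 2) (x : Cn 2) :
    AnalyticAt ℂ (fun x : Cn 2 => rootsProd m s (x k)) x := by
  have h : AnalyticAt ℂ (fun x : Cn 2 => x k) x :=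
    (ContinuousLinearMap.proj (R := ℂ) (φ := fun _ : Fin 2 => ℂ) k).analyticAt _
  unfold rootsProd
  exact Finset.analyticAt_fun_prod _ fun i _ => h.sub analyticAt_const

/-- perturbed map -/
def pert (n₁ n₂ : ℕ) (v₁ v₂ w₁ w₂ : Cn 2 → ℂ) (s a : ℂ) (x : Cn 2) : Cn 2 :=
  ![rootsProd n₁ s (x 0) * (v₁ x + a) + rootsProd n₂ s (x 1) * w₁ x,
    rootsProd n₁ s (x 0) * v₂ x + rootsProd n₂ s (x 1) * (w₂ x + a)]

lemma pert_an {n₁ n₂ : ℕ} {v₁ v₂ w₁ w₂ : Cn 2 → ℂ} {x : Cn 2} (s a : ℂ)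
    (hv₁ : AnalyticAt ℂ v₁ x) (hv₂ : AnalyticAt ℂ v₂ x)
    (hw₁ : AnalyticAt ℂ w₁ x) (hw₂ : AnalyticAt ℂ w₂ x) :
    AnalyticAt ℂ (pert n₁ n₂ v₁ v₂ w₁ w₂ s a) x := by
  rw [analyticAt_pi_iff]
  have hp := rootsProd_an n₁ s 0 x
  have hq := rootsProd_an n₂ s 1 x
  intro i
  fin_cases i
  · exact (hp.mul (hv₁.add analyticAt_const)).add (hq.mul hw₁)
  · exact (hp.mul hv₂).add (hq.mul (hw₂.add analyticAt_const))

lemma pd_aux {p q u w : Cn 2 → ℂ} {x : Cn 2} {dp dq : Cn 2 →L[ℂ] ℂ} (hp : HasFDerivAt p dp x)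
    (hq : HasFDerivAt q dq x) (hu : AnalyticAt ℂ u x) (hw : AnalyticAt ℂ w x)
    (hp0 : p x = 0) (hq0 : q x = 0) (e : Cn 2) :
    fderiv ℂ (fun x => p x * u x + q x * w x) x e = u x * dp e + w x * dq e := by
  have h := (hp.mul hu.differentiableAt.hasFDerivAt).add (hq.mul hw.differentiableAt.hasFDerivAt)
  have h' : HasFDerivAt (fun x => p x * u x + q x * w x) _ x := h
  rw [h'.fderiv]
  simp [hp0, hq0]

lemma pert_jac {n₁ n₂ : ℕ} {v₁ v₂ w₁ w₂ : Cn 2 → ℂ} {x : Cn 2} {s : ℂ} (hs : s ≠ 0) (a : ℂ)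
    (hv₁ : AnalyticAt ℂ v₁ x) (hv₂ : AnalyticAt ℂ v₂ x)
    (hw₁ : AnalyticAt ℂ w₁ x) (hw₂ : AnalyticAt ℂ w₂ x) {i j : ℕ} (hi : i < n₁) (hj : j < n₂)
    (hx0 : x 0 = s * i) (hx1 : x 1 = s * j)
    (hD : (v₁ x + a) * (w₂ x + a) - w₁ x * v₂ x ≠ 0) :
    pert n₁ n₂ v₁ v₂ w₁ w₂ s a x = 0 ∧ Jac (pert n₁ n₂ v₁ v₂ w₁ w₂ s a) x ≠ 0 := by
  have hp0 : rootsProd n₁ s (x 0) = 0 := by rw [hx0]; exact rootsProd_root _ _ hi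
  have hq0 : rootsProd n₂ s (x 1) = 0 := by rw [hx1]; exact rootsProd_root _ _ hj
  constructor
  · ext k
    fin_cases k <;> simp [pert, hp0, hq0]
  obtain ⟨d, hd, hdd⟩ := rootsProd_deriv n₁ s hs hi
  obtain ⟨d', hd', hdd'⟩ := rootsProd_deriv n₂ s hs hj
  rw [← hx0] at hdd
  rw [← hx1] at hdd'
  have hp : HasFDerivAt (fun x : Cn 2 => rootsProd n₁ s (x 0))
      (d • ContinuousLinearMap.proj (R := ℂ) (φ := fun _ : Fin 2 => ℂ) 0) x :=
    HasDerivAt.comp_hasFDerivAt (h₂ := rootsProd n₁ s) (f := fun x : Cn 2 => x 0) x hdd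
      (ContinuousLinearMap.proj (R := ℂ) (φ := fun _ : Fin 2 => ℂ) 0).hasFDerivAt
  have hq : HasFDerivAt (fun x : Cn 2 => rootsProd n₂ s (x 1))
      (d' • ContinuousLinearMap.proj (R := ℂ) (φ := fun _ : Fin 2 => ℂ) 1) x :=
    HasDerivAt.comp_hasFDerivAt (h₂ := rootsProd n₂ s) (f := fun x : Cn 2 => x 1) x hdd'
      (ContinuousLinearMap.proj (R := ℂ) (φ := fun _ : Fin 2 => ℂ) 1).hasFDerivAt
  have han := pert_an (n₁ := n₁) (n₂ := n₂) s a hv₁ hv₂ hw₁ hw₂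
  have r0 : ∀ k, pd (pert n₁ n₂ v₁ v₂ w₁ w₂ s a) 0 k x = _ := fun k =>
    (fderiv_comp_apply han 0 k).symm.trans
      (pd_aux hp hq (hv₁.add (analyticAt_const (v := a))) hw₁ hp0 hq0 (Pi.single k 1))
  have r1 : ∀ k, pd (pert n₁ n₂ v₁ v₂ w₁ w₂ s a) 1 k x = _ := fun k =>
    (fderiv_comp_apply han 1 k).symm.trans
      (pd_aux hp hq hv₂ (hw₂.add (analyticAt_const (v := a))) hp0 hq0 (Pi.single k 1))
  have : Jac (pert n₁ n₂ v₁ v₂ w₁ w₂ s a) x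
      = d * d' * ((v₁ x + a) * (w₂ x + a) - w₁ x * v₂ x) := by
    rw [Jac, r0, r0, r1, r1]
    simp
    ring
  rw [this]
  exact mul_ne_zero (mul_ne_zero hd hd') hD

lemma quad_finite (A B D : ℂ) : {a : ℂ | (A + a) * (B + a) - D = 0}.Finite := by
  let p : ℂ[X] := X ^ 2 + C (A + B) * X + C (A * B - D)
  have hp : p.Monic := by
    simp only [p]
    monicity!
  apply (p.roots.toFinset.finite_toSet).subset
  intro a ha
  simp only [Set.mem_ofPred_eq] at ha
  simp only [Finset.mem_coe, Multiset.mem_toFinset, mem_roots hp.ne_zero, IsRoot, p]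
  simp only [eval_add, eval_mul, eval_pow, eval_X, eval_C]
  linear_combination ha

lemma pert_exists {r : ℝ} (hr : 0 < r) {n₁ n₂ : ℕ} {v₁ v₂ w₁ w₂ : Cn 2 → ℂ} {f : Cn 2 → Cn 2}
    (hv₁ : AnalyticOnNhd ℂ v₁ (closedBall 0 r)) (hv₂ : AnalyticOnNhd ℂ v₂ (closedBall 0 r))
    (hw₁ : AnalyticOnNhd ℂ w₁ (closedBall 0 r)) (hw₂ : AnalyticOnNhd ℂ w₂ (closedBall 0 r))
    (hf : AnalyticOnNhd ℂ f (closedBall 0 r))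
    (hform : ∀ x ∈ closedBall (0 : Cn 2) r,
      f x = ![x 0 ^ n₁ * v₁ x + x 1 ^ n₂ * w₁ x, x 0 ^ n₁ * v₂ x + x 1 ^ n₂ * w₂ x])
    (η : ℝ) (hη : 0 < η) :
    ∃ s a : ℂ, s ≠ 0 ∧ (∀ x ∈ closedBall (0 : Cn 2) r, ‖pert n₁ n₂ v₁ v₂ w₁ w₂ s a x - f x‖ < η) ∧
      ∀ i < n₁, ∀ j < n₂, (![s * i, s * j] : Cn 2) ∈ ball (0 : Cn 2) r ∧
        (v₁ ![s * i, s * j] + a) * (w₂ ![s * i, s * j] + a) - w₁ ![s * i, s * j] * v₂ ![s * i, s * j] ≠ 0 := by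
  have hclose : ∀ᶠ p : ℂ × ℂ in 𝓝 (0, 0), ∀ x ∈ closedBall (0 : Cn 2) r,
      ‖pert n₁ n₂ v₁ v₂ w₁ w₂ p.1 p.2 x - f x‖ < η := by
    apply (isCompact_closedBall (0 : Cn 2) r).eventually_forall_of_forall_eventually
    intro x hx
    have c1 : ∀ u : Cn 2 → ℂ, AnalyticOnNhd ℂ u (closedBall 0 r) →
        ContinuousAt (fun z : (ℂ × ℂ) × Cn 2 => u z.2) ((0, 0), x) := fun u hu =>
      ContinuousAt.comp (f := fun z : (ℂ × ℂ) × Cn 2 => z.2) (hu x hx).continuousAt continuousAt_snd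
    have c2 : ∀ m k, ContinuousAt (fun z : (ℂ × ℂ) × Cn 2 => rootsProd m z.1.1 (z.2 k)) ((0, 0), x) := by
      intro m k
      have : Continuous (fun z : (ℂ × ℂ) × Cn 2 => rootsProd m z.1.1 (z.2 k)) :=
        (rootsProd_cont m).comp (f := fun z : (ℂ × ℂ) × Cn 2 => (z.1.1, z.2 k)) (by fun_prop)
      exact this.continuousAt
    have c3 : ContinuousAt (fun z : (ℂ × ℂ) × Cn 2 => z.1.2) ((0, 0), x) := by fun_prop
    have c4 : ContinuousAt (fun z : (ℂ × ℂ) × Cn 2 => f z.2) ((0, 0), x) :=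
      ContinuousAt.comp (f := fun z : (ℂ × ℂ) × Cn 2 => z.2) (hf x hx).continuousAt continuousAt_snd
    have c5 : ContinuousAt (fun z : (ℂ × ℂ) × Cn 2 => pert n₁ n₂ v₁ v₂ w₁ w₂ z.1.1 z.1.2 z.2)
        ((0, 0), x) := by
      rw [continuousAt_pi]
      intro i
      fin_cases i
      · exact ((c2 n₁ 0).mul ((c1 _ hv₁).add c3)).add ((c2 n₂ 1).mul (c1 _ hw₁))
      · exact ((c2 n₁ 0).mul (c1 _ hv₂)).add ((c2 n₂ 1).mul ((c1 _ hw₂).add c3))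
    have c6 := (c5.sub c4).norm
    apply c6.eventually_lt continuousAt_const
    have : pert n₁ n₂ v₁ v₂ w₁ w₂ 0 0 x = f x := by
      rw [hform x hx]
      simp [pert, rootsProd_zero]
    simpa [this] using hη
  obtain ⟨ρ, hρ, hρc⟩ := Metric.eventually_nhds_iff.1 hclose
  have hinf : (ball (0 : ℂ) ρ).Infinite := infinite_of_mem_nhds (0 : ℂ) (ball_mem_nhds 0 hρ)
  obtain ⟨a, haρ, ha⟩ := (hinf.sdiff (quad_finite (v₁ 0) (w₂ 0) (w₁ 0 * v₂ 0))).nonempty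
  have h0K : (0 : Cn 2) ∈ closedBall (0 : Cn 2) r := mem_closedBall_self hr.le
  have hpt : ∀ i j : ℕ, Tendsto (fun s : ℂ => (![s * i, s * j] : Cn 2)) (𝓝 0) (𝓝 0) := by
    intro i j
    have hc : Continuous (fun s : ℂ => (![s * i, s * j] : Cn 2)) := by
      apply continuous_pi
      intro k
      fin_cases k <;> simp <;> fun_prop
    have e : (![(0 : ℂ) * i, 0 * j] : Cn 2) = 0 := by
      ext k
      fin_cases k <;> simp
    have := hc.tendsto 0
    rwa [e] at this
  have hQ : ∀ᶠ x in 𝓝 (0 : Cn 2), x ∈ ball (0 : Cn 2) r ∧ (v₁ x + a) * (w₂ x + a) - w₁ x * v₂ x ≠ 0 := by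
    refine Filter.Eventually.and (isOpen_ball.mem_nhds (mem_ball_self hr)) ?_
    have hc : ContinuousAt (fun x => (v₁ x + a) * (w₂ x + a) - w₁ x * v₂ x) 0 :=
      (((hv₁ 0 h0K).continuousAt.add continuousAt_const).mul
        ((hw₂ 0 h0K).continuousAt.add continuousAt_const)).sub
        ((hw₁ 0 h0K).continuousAt.mul (hv₂ 0 h0K).continuousAt)
    exact hc.eventually_ne ha
  have hall : ∀ᶠ s : ℂ in 𝓝 0, ∀ i ∈ Finset.range n₁, ∀ j ∈ Finset.range n₂,
      ((![s * i, s * j] : Cn 2) ∈ ball (0 : Cn 2) r ∧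
        (v₁ ![s * i, s * j] + a) * (w₂ ![s * i, s * j] + a) - w₁ ![s * i, s * j] * v₂ ![s * i, s * j] ≠ 0) := by
    rw [eventually_all_finset]
    intro i _
    rw [eventually_all_finset]
    intro j _
    exact (hpt i j).eventually hQ
  have hfin : ∀ᶠ s : ℂ in 𝓝[≠] 0, s ≠ 0 ∧ s ∈ ball (0 : ℂ) ρ ∧ ∀ i ∈ Finset.range n₁, ∀ j ∈ Finset.range n₂,
      ((![s * i, s * j] : Cn 2) ∈ ball (0 : Cn 2) r ∧
        (v₁ ![s * i, s * j] + a) * (w₂ ![s * i, s * j] + a) - w₁ ![s * i, s * j] * v₂ ![s * i, s * j] ≠ 0) := by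
    filter_upwards [self_mem_nhdsWithin, nhdsWithin_le_nhds (ball_mem_nhds (0 : ℂ) hρ),
      nhdsWithin_le_nhds hall] with s a b c using ⟨a, b, c⟩
  obtain ⟨s, hs0, hsρ, hs⟩ := hfin.exists
  refine ⟨s, a, hs0, ?_, fun i hi j hj => hs i (Finset.mem_range.2 hi) j (Finset.mem_range.2 hj)⟩
  apply hρc (y := (s, a))
  rw [Prod.dist_eq]
  exact max_lt hsρ haρ

lemma lower {r : ℝ} (hr : 0 < r) {n₁ n₂ : ℕ} {v₁ v₂ w₁ w₂ : Cn 2 → ℂ} {f : Cn 2 → Cn 2}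
    (hv₁ : AnalyticOnNhd ℂ v₁ (closedBall 0 r)) (hv₂ : AnalyticOnNhd ℂ v₂ (closedBall 0 r))
    (hw₁ : AnalyticOnNhd ℂ w₁ (closedBall 0 r)) (hw₂ : AnalyticOnNhd ℂ w₂ (closedBall 0 r))
    (hf : AnalyticOnNhd ℂ f (closedBall 0 r))
    (hform : ∀ x ∈ closedBall (0 : Cn 2) r,
      f x = ![x 0 ^ n₁ * v₁ x + x 1 ^ n₂ * w₁ x, x 0 ^ n₁ * v₂ x + x 1 ^ n₂ * w₂ x])
    {c : ℝ} (hcm : ∀ x ∈ sphere (0 : Cn 2) r, c ≤ ‖f x‖) {q : Cn 2} (hq : ‖q‖ < c)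
    (hqr : IsRegularValueOn f (ball 0 r) q) :
    n₁ * n₂ ≤ {x ∈ ball (0 : Cn 2) r | f x = q}.ncard := by
  obtain ⟨s, a, hs0, hcl, hpts⟩ := pert_exists hr hv₁ hv₂ hw₁ hw₂ hf hform ((c - ‖q‖) / 2) (by linarith)
  have hne : ∀ x ∈ sphere (0 : Cn 2) r, f x ≠ q := by
    intro x hx h
    have := hcm x hx
    rw [h] at this; linarith
  obtain ⟨S, hS1, hS2, hS3⟩ := fiber_data hf hqr hne
  let T : Finset (Cn 2) := (Finset.range n₁ ×ˢ Finset.range n₂).image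
    (fun p : ℕ × ℕ => (![s * p.1, s * p.2] : Cn 2))
  have hT : T.card = n₁ * n₂ := by
    rw [Finset.card_image_of_injective]
    · simp
    · rintro ⟨i, j⟩ ⟨i', j'⟩ h
      have h0 := congrFun h 0
      have h1 := congrFun h 1
      simp [hs0] at h0 h1
      simp [h0, h1]
  rw [← hS1, ← hT]
  refine compare (r := r) (c := (c - ‖q‖) / 2) (by linarith) (F := fun x => f x - q)
    (G := pert n₁ n₂ v₁ v₂ w₁ w₂ s a) (hf.sub analyticOnNhd_const)
    (fun x hx => pert_an s a (hv₁ x hx) (hv₂ x hx) (hw₁ x hx) (hw₂ x hx)) ?_ S T hS2 hS3 ?_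
  · intro t ht x hx
    have h1 := hcl x (sphere_subset_closedBall hx)
    set g := pert n₁ n₂ v₁ v₂ w₁ w₂ s a x
    have e : f x - q + (t : ℂ) • (g - (f x - q)) = f x - ((1 - t : ℝ) • q - t • (g - f x)) := by
      ext i
      simp only [Pi.add_apply, Pi.sub_apply, Pi.smul_apply, smul_eq_mul, Complex.real_smul]
      push_cast; ring
    rw [e]
    have h2 : ‖(1 - t : ℝ) • q - t • (g - f x)‖ ≤ ‖q‖ + (c - ‖q‖) / 2 := by
      refine (norm_sub_le _ _).trans ?_
      rw [norm_smul, norm_smul, Real.norm_of_nonneg (by linarith [ht.2]), Real.norm_of_nonneg ht.1]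
      have a1 : (1 - t) * ‖q‖ ≤ 1 * ‖q‖ :=
        mul_le_mul_of_nonneg_right (by linarith [ht.1]) (norm_nonneg _)
      have a2 : t * ‖g - f x‖ ≤ 1 * ‖g - f x‖ :=
        mul_le_mul_of_nonneg_right ht.2 (norm_nonneg _)
      linarith
    have h3 := norm_sub_norm_le (f x) ((1 - t : ℝ) • q - t • (g - f x))
    linarith [hcm x hx]
  · intro x hx
    obtain ⟨⟨i, j⟩, hij, rfl⟩ := Finset.mem_image.1 hx
    rw [Finset.mem_product, Finset.mem_range, Finset.mem_range] at hij
    obtain ⟨hb, hD⟩ := hpts i hij.1 j hij.2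
    have hK := ball_subset_closedBall hb
    obtain ⟨z, hJ⟩ := pert_jac hs0 a (hv₁ _ hK) (hv₂ _ hK) (hw₁ _ hK) (hw₂ _ hK) hij.1 hij.2
      (by simp) (by simp) hD
    exact ⟨hb, z, (bij_iff _ _).2 hJ⟩

/-- Cronin-type estimate: if `f₁ = x₁^{n₁}·O(1) + x₂^{n₂}·O(1)` and
`f₂ = x₁^{n₁}·O(1) + x₂^{n₂}·O(1)`, and `0` is an isolated zero of `f`, then
`π_f(0) ≥ n₁ n₂`. -/
theorem zeroOrder_corollary_three (n₁ n₂ : ℕ) (hn₁ : 0 < n₁) (hn₂ : 0 < n₂)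
    (f : Cn 2 → Cn 2) (v₁ v₂ w₁ w₂ : Cn 2 → ℂ)
    (hv₁ : AnalyticAt ℂ v₁ 0) (hv₂ : AnalyticAt ℂ v₂ 0)
    (hw₁ : AnalyticAt ℂ w₁ 0) (hw₂ : AnalyticAt ℂ w₂ 0)
    (hform : ∀ᶠ x in 𝓝 (0 : Cn 2),
      f x = ![x 0 ^ n₁ * v₁ x + x 1 ^ n₂ * w₁ x,
              x 0 ^ n₁ * v₂ x + x 1 ^ n₂ * w₂ x])
    (hiso : IsolatedZeroAt0 f) :
    n₁ * n₂ ≤ zeroOrder f 0 := by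
  have hfan : AnalyticAt ℂ f 0 := by
    have h : AnalyticAt ℂ (fun x : Cn 2 => (![x 0 ^ n₁ * v₁ x + x 1 ^ n₂ * w₁ x,
              x 0 ^ n₁ * v₂ x + x 1 ^ n₂ * w₂ x] : Cn 2)) 0 := by
      rw [analyticAt_pi_iff]
      have hp : ∀ k : Fin 2, AnalyticAt ℂ (fun x : Cn 2 => x k) 0 := fun k =>
        (ContinuousLinearMap.proj (R := ℂ) (φ := fun _ : Fin 2 => ℂ) k).analyticAt _
      intro i
      fin_cases i
      · exact (((hp 0).pow n₁).mul hv₁).add (((hp 1).pow n₂).mul hw₁)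
      · exact (((hp 0).pow n₁).mul hv₂).add (((hp 1).pow n₂).mul hw₂)
    exact h.congr (hform.mono fun x hx => hx.symm)
  have hz : ∀ᶠ x in 𝓝 (0 : Cn 2), f x = 0 → x = 0 := by
    filter_upwards [eventually_nhdsWithin_iff.1 hiso.2] with x hx h
    by_contra hne
    exact hx hne h
  have hev := hfan.eventually_analyticAt.and (hz.and (hform.and
    (hv₁.eventually_analyticAt.and (hv₂.eventually_analyticAt.and
      (hw₁.eventually_analyticAt.and hw₂.eventually_analyticAt)))))
  obtain ⟨R, hR, hball⟩ := Metric.nhds_basis_closedBall.eventually_iff.1 hev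
  have hne : {m | HasZeroOrder f 0 m}.Nonempty :=
    hasZeroOrder_exists hR (fun x hx => (hball hx).1) hiso.1 (fun x hx => (hball hx).2.1)
  apply le_csInf hne
  rintro m ⟨r, hr, han, h0, hz0, hsard, δ, hδ, hcount⟩
  set r' := min r R with hr'
  have hr'pos : 0 < r' := lt_min hr hR
  have hsubR : closedBall (0 : Cn 2) r' ⊆ closedBall 0 R := closedBall_subset_closedBall (min_le_right _ _)
  have hsubr : closedBall (0 : Cn 2) r' ⊆ closedBall 0 r := closedBall_subset_closedBall (min_le_left _ _)
  have hsph : ∀ ρ, 0 < ρ → ρ ≤ r → ∃ c > 0, ∀ x ∈ sphere (0 : Cn 2) ρ, c ≤ ‖f x‖ := by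
    intro ρ hρ hρr
    have hsub : sphere (0 : Cn 2) ρ ⊆ closedBall 0 r :=
      sphere_subset_closedBall.trans (closedBall_subset_closedBall hρr)
    apply pos_min (isCompact_sphere (0 : Cn 2) ρ) (han.continuousOn.mono hsub)
    intro x hx h
    have := hz0 x (hsub hx) h
    rw [this] at hx
    simp at hx
    exact hρ.ne hx
  obtain ⟨c₁, hc₁, hm₁⟩ := hsph r hr le_rfl
  obtain ⟨c₂, hc₂, hm₂⟩ := hsph r' hr'pos (min_le_left _ _)
  obtain ⟨q, hq, hqr⟩ := hsard (min δ (min c₁ c₂)) (lt_min hδ (lt_min hc₁ hc₂))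
  rw [lt_min_iff, lt_min_iff] at hq
  rw [← hcount q hq.1 hqr]
  have hbb : ball (0 : Cn 2) r' ⊆ ball 0 r := ball_subset_ball (min_le_left _ _)
  have hfin : {x ∈ ball (0 : Cn 2) r | f x = q}.Finite := by
    refine (fiber_finite han hqr ?_).1
    intro x hx h
    have := hm₁ x hx
    rw [h] at this
    linarith [hq.2.1]
  have hlow := lower hr'pos (n₁ := n₁) (n₂ := n₂) (v₁ := v₁) (v₂ := v₂) (w₁ := w₁) (w₂ := w₂) (f := f)
    (fun x hx => (hball (hsubR hx)).2.2.2.1) (fun x hx => (hball (hsubR hx)).2.2.2.2.1)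
    (fun x hx => (hball (hsubR hx)).2.2.2.2.2.1) (fun x hx => (hball (hsubR hx)).2.2.2.2.2.2)
    (han.mono hsubr) (fun x hx => (hball (hsubR hx)).2.2.1) hm₂ hq.2.2
    (fun x hx => hqr x (hbb hx))
  exact hlow.trans (ncard_le_ncard (fun x hx => ⟨hbb hx.1, hx.2⟩) hfin)

end ZhangPaper
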